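/- Let T be a tournament, uv ∈ E(T), Back the set of back arcs of T, T̄ the tournament T with the arc uv reversed, and Back̄ the set of back arcs of T̄. Then |Back △ Back̄| ≤ 48(√(ADT(T) + 1) + 1). -/

import Mathlib

variable {V : Type*}

def IsTournament (E : V → V → Prop) : Prop :=
  (∀ v : V, ¬ E v v) ∧ ∀ u v : V, u ≠ v → (E u v ↔ ¬ E v u)

def Acyclic (E : V → V → Prop) : Prop :=
  ∀ v : V, ¬ Relation.TransGen E v v

noncomputable def indeg [Fintype V] (E : V → V → Prop) (v : V) : ℕ :=
  Set.ncard {u : V | E u v}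

noncomputable def indegOn [Fintype V] (E : V → V → Prop) (X : Set V) (v : V) : ℕ :=
  Set.ncard {u : V | u ∈ X ∧ E u v}

def IsTriangle (E : V → V → Prop) (t : V × V × V) : Prop :=
  E t.1 t.2.1 ∧ E t.2.1 t.2.2 ∧ E t.2.2 t.1

def triArcs (t : V × V × V) : Set (V × V) :=
  {(t.1, t.2.1), (t.2.1, t.2.2), (t.2.2, t.1)}

def IsADTFamily (E : V → V → Prop) (F : Finset (V × V × V)) : Prop :=
  (∀ t ∈ F, IsTriangle E t) ∧
    ∀ t ∈ F, ∀ s ∈ F, t ≠ s → Disjoint (triArcs t) (triArcs s)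

noncomputable def ADT (E : V → V → Prop) : ℕ :=
  sSup {n : ℕ | ∃ F : Finset (V × V × V), IsADTFamily E F ∧ F.card = n}

def IsFAS (E : V → V → Prop) (S : Finset (V × V)) : Prop :=
  Acyclic fun u v => E u v ∧ (u, v) ∉ S

noncomputable def FAST (E : V → V → Prop) : ℕ :=
  sInf {n : ℕ | ∃ S : Finset (V × V), IsFAS E S ∧ S.card = n}

def IsFVS (E : V → V → Prop) (F : Finset V) : Prop :=
  Acyclic fun a b => E a b ∧ a ∉ F ∧ b ∉ F

noncomputable def FVST [Fintype V] (E : V → V → Prop) : ℕ :=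
  sInf {n : ℕ | ∃ F : Finset V, IsFVS E F ∧ F.card = n}

noncomputable def maxdb [Fintype V] (E : V → V → Prop) : ℕ :=
  (Finset.range (Fintype.card V)).sup fun d => Set.ncard {v : V | indeg E v = d}

open Classical in
noncomputable def prefLen [Fintype V] (E : V → V → Prop) : ℕ :=
  if ∀ d < Fintype.card V, Set.ncard {v : V | indeg E v = d} = 1 then Fintype.card V
  else sInf {d : ℕ | d < Fintype.card V ∧ Set.ncard {v : V | indeg E v = d} ≠ 1}

noncomputable def prefSet [Fintype V] (E : V → V → Prop) : Set V :=
  {v : V | indeg E v < prefLen E}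

noncomputable def minIndeg [Fintype V] (E : V → V → Prop) : ℕ :=
  sInf {k : ℕ | ∃ v : V, indeg E v = k}

noncomputable def minIndegOn [Fintype V] (E : V → V → Prop) (X : Set V) : ℕ :=
  sInf {k : ℕ | ∃ v ∈ X, indegOn E X v = k}

def emptyBuckets [Fintype V] (E : V → V → Prop) : Set ℕ :=
  {d : ℕ | d < Fintype.card V ∧ {v : V | indeg E v = d} = ∅}

def backArcs [Fintype V] (E : V → V → Prop) : Set (V × V) :=
  {p : V × V | E p.1 p.2 ∧ indeg E p.2 ≤ indeg E p.1}

def reverseArc (E : V → V → Prop) (u v : V) : V → V → Prop :=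
  fun a b =>
    (¬ ((a, b) = (u, v) ∨ (a, b) = (v, u)) ∧ E a b) ∨
      ((a, b) = (u, v) ∧ E v u) ∨ ((a, b) = (v, u) ∧ E u v)

def affected [Fintype V] (E : V → V → Prop) (u v : V) : Set V :=
  {w : V | indeg E w + 1 = indeg E u ∨ indeg E w = indeg E u ∨ indeg E w = indeg E u + 1 ∨
      indeg E w + 1 = indeg E v ∨ indeg E w = indeg E v ∨ indeg E w = indeg E v + 1}

def kLong [Fintype V] (E : V → V → Prop) (k : ℕ) (p : V × V) : Prop :=
  (k : ℤ) ≤ |(indeg E p.1 : ℤ) - (indeg E p.2 : ℤ)|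

def longAdj [Fintype V] (E : V → V → Prop) (k : ℕ) (a b : V) : Prop :=
  ((a, b) ∈ backArcs E ∧ kLong E k (a, b)) ∨ ((b, a) ∈ backArcs E ∧ kLong E k (b, a))

def heavySet [Fintype V] (E : V → V → Prop) (k : ℕ) : Set V :=
  {v : V | k < Set.ncard {u : V | longAdj E k u v}}


section Aux
open Finset

open Classical in
/-- The set of arcs used by a family of triangles. -/
noncomputable def usedArcs (F : Finset (V × V × V)) : Finset (V × V) :=
  F.biUnion fun t => {(t.1, t.2.1), (t.2.1, t.2.2), (t.2.2, t.1)}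

theorem usedArcs_card (F : Finset (V × V × V)) : (usedArcs F).card ≤ F.card * 3 := by
  classical
  unfold usedArcs
  exact card_biUnion_le_card_mul _ _ _ fun t _ => card_le_three

theorem mem_usedArcs (F : Finset (V × V × V)) (p : V × V) :
    p ∈ usedArcs F ↔ ∃ t ∈ F, p ∈ triArcs t := by
  classical
  simp [usedArcs, triArcs]

theorem exists_max_family [Fintype V] (E : V → V → Prop) :
    ∃ F : Finset (V × V × V), F.card = ADT E ∧ ∀ a b c, E a b → E b c → E c a →
      (a, b) ∈ usedArcs F ∨ (b, c) ∈ usedArcs F ∨ (c, a) ∈ usedArcs F := by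
  classical
  have hne : {n : ℕ | ∃ F : Finset (V × V × V), IsADTFamily E F ∧ F.card = n}.Nonempty :=
    ⟨0, ∅, by simp [IsADTFamily], by simp⟩
  have hbd : BddAbove {n : ℕ | ∃ F : Finset (V × V × V), IsADTFamily E F ∧ F.card = n} := by
    refine ⟨Fintype.card (V × V × V), ?_⟩
    rintro n ⟨F, _, rfl⟩
    exact card_le_univ F
  obtain ⟨F, hF, hc⟩ := Nat.sSup_mem hne hbd
  refine ⟨F, hc, ?_⟩
  intro a b c hab hbc hca
  by_contra! hcon
  obtain ⟨h1, h2, h3⟩ := hcon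
  have hd : ∀ t ∈ F, Disjoint (triArcs (a, b, c)) (triArcs t) := by
    intro t ht
    rw [Set.disjoint_left]
    intro p hp hpt
    have hu : p ∈ usedArcs F := (mem_usedArcs F p).2 ⟨t, ht, hpt⟩
    simp only [triArcs, Set.mem_insert_iff, Set.mem_singleton_iff] at hp
    rcases hp with rfl | rfl | rfl
    · exact h1 hu
    · exact h2 hu
    · exact h3 hu
  have hnot : (a, b, c) ∉ F := by
    intro h
    exact h1 ((mem_usedArcs F _).2 ⟨_, h, by simp [triArcs]⟩)
  have hins : IsADTFamily E (insert (a, b, c) F) := by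
    refine ⟨?_, ?_⟩
    · intro t ht
      rcases mem_insert.1 ht with rfl | ht
      · exact ⟨hab, hbc, hca⟩
      · exact hF.1 t ht
    · intro t ht s hs hts
      rcases mem_insert.1 ht with rfl | ht <;> rcases mem_insert.1 hs with rfl | hs
      · exact absurd rfl hts
      · exact hd s hs
      · exact (hd t ht).symm
      · exact hF.2 t ht s hs hts
  have hle := le_csSup hbd ⟨_, hins, rfl⟩
  rw [card_insert_of_notMem hnot] at hle
  omega

open Classical in
theorem indeg_eq [Fintype V] (E : V → V → Prop) (v : V) :
    indeg E v = (univ.filter fun u => E u v).card := by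
  unfold indeg
  rw [← Set.ncard_coe_finset]
  simp

open Classical in
theorem pair_bound [Fintype V] (E : V → V → Prop) (hT : IsTournament E)
    (U : Finset (V × V))
    (hU : ∀ a b c, E a b → E b c → E c a → (a, b) ∈ U ∨ (b, c) ∈ U ∨ (c, a) ∈ U)
    (S : Finset V) (u v : V) (huv : E u v) (hd : indeg E u = indeg E v) :
    (S.filter fun w => (E u w ∧ E w v) ∨ (E v w ∧ E w u)).card ≤
      (if (u, v) ∈ U then S.card else 0) +
        2 * ((univ.filter fun w => (w, u) ∈ U).card + (univ.filter fun w => (v, w) ∈ U).card) := by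
  split_ifs with h
  · exact (card_filter_le _ _).trans (by omega)
  obtain ⟨h0, h1⟩ := hT
  have hne : u ≠ v := by rintro rfl; exact h0 _ huv
  have hvu : ¬ E v u := (h1 u v hne).1 huv
  set C := (univ.filter fun w => E v w ∧ E w u) with hC
  set Tr := (univ.filter fun w => E u w ∧ E w v) with hTr
  have hCb : C.card ≤
      (univ.filter fun w => (w, u) ∈ U).card + (univ.filter fun w => (v, w) ∈ U).card := by
    refine (card_le_card ?_).trans (card_union_le _ _)
    intro w hw
    simp only [hC, mem_filter, mem_univ, true_and, mem_union] at hw ⊢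
    rcases hU u v w huv hw.1 hw.2 with h' | h' | h'
    · exact absurd h' h
    · exact Or.inr h'
    · exact Or.inl h'
  have hTC : Tr.card ≤ C.card := by
    rw [indeg_eq, indeg_eq] at hd
    have e := card_sdiff_comm hd
    have a1 : Tr ⊆ (univ.filter fun w => E w v) \ (univ.filter fun w => E w u) := by
      intro w hw
      simp only [hTr, mem_filter, mem_univ, true_and, mem_sdiff] at hw ⊢
      refine ⟨hw.2, ?_⟩
      have : u ≠ w := by rintro rfl; exact h0 _ hw.1
      exact (h1 u w this).1 hw.1
    have a2 : (univ.filter fun w => E w u) \ (univ.filter fun w => E w v) ⊆ C := by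
      intro w hw
      simp only [hC, mem_filter, mem_univ, true_and, mem_sdiff] at hw ⊢
      have : v ≠ w := by rintro rfl; exact hvu hw.1
      exact ⟨(h1 v w this).2 hw.2, hw.1⟩
    have := card_le_card a1
    have := card_le_card a2
    omega
  have : (S.filter fun w => (E u w ∧ E w v) ∨ (E v w ∧ E w u)).card ≤ Tr.card + C.card := by
    refine (card_le_card ?_).trans (card_union_le _ _)
    intro w hw
    simp only [hC, hTr, mem_filter, mem_univ, true_and, mem_union] at hw ⊢
    exact hw.2
  omega

open Classical in
theorem fiber_fst [Fintype V] (U : Finset (V × V)) (S : Finset V) :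
    ∑ v ∈ S, (univ.filter fun w => (v, w) ∈ U).card ≤ U.card := by
  rw [← card_sigma]
  refine card_le_card_of_injOn (fun p => (p.1, p.2)) ?_ ?_
  · intro p hp
    simp at hp ⊢
    exact hp.2
  · rintro ⟨a, b⟩ _ ⟨c, d⟩ _ h
    simp at h ⊢
    exact h

open Classical in
theorem fiber_snd [Fintype V] (U : Finset (V × V)) (S : Finset V) :
    ∑ v ∈ S, (univ.filter fun w => (w, v) ∈ U).card ≤ U.card := by
  rw [← card_sigma]
  refine card_le_card_of_injOn (fun p => (p.2, p.1)) ?_ ?_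
  · intro p hp
    simp at hp ⊢
    exact hp.2
  · rintro ⟨a, b⟩ _ ⟨c, d⟩ _ h
    simp at h ⊢
    exact ⟨h.2, h.1⟩

set_option maxHeartbeats 1000000 in
theorem bucket_bound [Fintype V] (E : V → V → Prop) (hT : IsTournament E) (S : Finset V)
    (d : ℕ) (hS : ∀ v ∈ S, indeg E v = d) :
    S.card ^ 2 ≤ 3 * S.card + 90 * ADT E := by
  classical
  obtain ⟨F, hF, hU⟩ := exists_max_family E
  have hUc := usedArcs_card F
  rw [hF] at hUc
  set U := usedArcs F
  set m := S.card with hm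
  set g : V → V → Finset V := fun u v =>
    S.filter fun w => E u v ∧ ((E u w ∧ E w v) ∨ (E v w ∧ E w u)) with hg
  set P : Finset (V × V × V) := (S ×ˢ S ×ˢ S).filter fun p =>
    E p.1 p.2.1 ∧ ((E p.1 p.2.2 ∧ E p.2.2 p.2.1) ∨ (E p.2.1 p.2.2 ∧ E p.2.2 p.1)) with hP
  have hPc : P.card ≤ ∑ u ∈ S, ∑ v ∈ S, (g u v).card := by
    rw [hP, card_filter, sum_product]
    refine sum_le_sum fun u _ => ?_
    rw [sum_product]
    refine sum_le_sum fun v _ => ?_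
    rw [hg, card_filter]
  have hgb : ∀ u ∈ S, ∀ v ∈ S, (g u v).card ≤ (if (u, v) ∈ U then m else 0) +
      2 * ((univ.filter fun w => (w, u) ∈ U).card + (univ.filter fun w => (v, w) ∈ U).card) := by
    intro u hu v hv
    by_cases h : E u v
    · have := pair_bound E hT U hU S u v h ((hS u hu).trans (hS v hv).symm)
      simpa [hg, h] using this
    · simp [hg, h]
  have hsum : ∑ u ∈ S, ∑ v ∈ S, (g u v).card ≤ U.card * m + 2 * (m * U.card + m * U.card) := by
    refine (sum_le_sum fun u hu => sum_le_sum fun v hv => hgb u hu v hv).trans ?_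
    simp only [sum_add_distrib, ← mul_sum]
    have b1 : ∑ u ∈ S, ∑ v ∈ S, (if (u, v) ∈ U then m else 0) ≤ U.card * m := by
      rw [← sum_product' (f := fun u v => if (u, v) ∈ U then m else 0), ← sum_filter]
      simp only [Prod.mk.eta, sum_const, smul_eq_mul]
      refine Nat.mul_le_mul_right _ (card_le_card ?_)
      intro p hp
      exact (mem_filter.1 hp).2
    have b2 : ∑ u ∈ S, ∑ _v ∈ S, (univ.filter fun w => (w, u) ∈ U).card ≤ m * U.card := by
      simp only [sum_const, smul_eq_mul, ← mul_sum]
      exact Nat.mul_le_mul_left _ (fiber_snd U S)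
    have b3 : ∑ _u ∈ S, ∑ v ∈ S, (univ.filter fun w => (v, w) ∈ U).card ≤ m * U.card := by
      simp only [sum_const, smul_eq_mul]
      exact Nat.mul_le_mul_left _ (fiber_fst U S)
    omega
  have hcov : S ×ˢ S ×ˢ S ⊆
      ((S ×ˢ S).image (fun p => (p.1, p.1, p.2)) ∪ (S ×ˢ S).image (fun p => (p.1, p.2, p.2)) ∪
        (S ×ˢ S).image (fun p => (p.1, p.2, p.1))) ∪
      (((P.image (fun p => (p.1, p.2.1, p.2.2)) ∪ P.image (fun p => (p.1, p.2.2, p.2.1))) ∪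
       (P.image (fun p => (p.2.1, p.1, p.2.2)) ∪ P.image (fun p => (p.2.1, p.2.2, p.1)))) ∪
       (P.image (fun p => (p.2.2, p.1, p.2.1)) ∪ P.image (fun p => (p.2.2, p.2.1, p.1)))) := by
    rintro ⟨a, b, c⟩ h
    simp only [mem_product] at h
    obtain ⟨ha, hb, hc⟩ := h
    simp only [hP, mem_union, mem_image, mem_filter, mem_product, Prod.exists, Prod.mk.injEq]
    by_cases hab : a = b
    · subst hab
      exact Or.inl (Or.inl (Or.inl ⟨a, c, ⟨ha, hc⟩, rfl, rfl, rfl⟩))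
    by_cases hbc : b = c
    · subst hbc
      exact Or.inl (Or.inl (Or.inr ⟨a, b, ⟨ha, hb⟩, rfl, rfl, rfl⟩))
    by_cases hac : a = c
    · subst hac
      exact Or.inl (Or.inr ⟨a, b, ⟨ha, hb⟩, rfl, rfl, rfl⟩)
    right
    have e1 := hT.2 a b hab
    have e2 := hT.2 b c hbc
    have e3 := hT.2 a c hac
    have key : (E a b ∧ ((E a c ∧ E c b) ∨ (E b c ∧ E c a))) ∨
      (E a c ∧ ((E a b ∧ E b c) ∨ (E c b ∧ E b a))) ∨
      (E b a ∧ ((E b c ∧ E c a) ∨ (E a c ∧ E c b))) ∨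
      (E c a ∧ ((E c b ∧ E b a) ∨ (E a b ∧ E b c))) ∨
      (E b c ∧ ((E b a ∧ E a c) ∨ (E c a ∧ E a b))) ∨
      (E c b ∧ ((E c a ∧ E a b) ∨ (E b a ∧ E a c))) := by
      clear * - e1 e2 e3
      by_cases x1 : E b a <;> by_cases x2 : E c b <;> by_cases x3 : E c a <;>
        simp [x1, x2, x3] at e1 e2 e3 ⊢ <;> simp [e1, e2, e3]
    rcases key with k | k | k | k | k | k
    · exact Or.inl (Or.inl (Or.inl ⟨a, b, c, ⟨⟨ha, hb, hc⟩, k⟩, rfl, rfl, rfl⟩))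
    · exact Or.inl (Or.inl (Or.inr ⟨a, c, b, ⟨⟨ha, hc, hb⟩, k⟩, rfl, rfl, rfl⟩))
    · exact Or.inl (Or.inr (Or.inl ⟨b, a, c, ⟨⟨hb, ha, hc⟩, k⟩, rfl, rfl, rfl⟩))
    · exact Or.inl (Or.inr (Or.inr ⟨c, a, b, ⟨⟨hc, ha, hb⟩, k⟩, rfl, rfl, rfl⟩))
    · exact Or.inr (Or.inl ⟨b, c, a, ⟨⟨hb, hc, ha⟩, k⟩, rfl, rfl, rfl⟩)
    · exact Or.inr (Or.inr ⟨c, b, a, ⟨⟨hc, hb, ha⟩, k⟩, rfl, rfl, rfl⟩)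
  have hcub : m * (m * m) ≤ ((m * m + m * m) + m * m) +
      (((P.card + P.card) + (P.card + P.card)) + (P.card + P.card)) := by
    have h1 := card_le_card hcov
    rw [card_product, card_product] at h1
    have hi : ∀ f : V × V → V × V × V, ((S ×ˢ S).image f).card ≤ m * m := by
      intro f
      rw [hm, ← card_product]
      exact card_image_le
    have hj : ∀ f : V × V × V → V × V × V, (P.image f).card ≤ P.card := fun f => card_image_le
    refine h1.trans ?_
    refine (card_union_le _ _).trans (add_le_add ?_ ?_)
    · refine (card_union_le _ _).trans (add_le_add ?_ (hi _))
      exact (card_union_le _ _).trans (add_le_add (hi _) (hi _))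
    · refine (card_union_le _ _).trans (add_le_add ?_ ?_)
      · refine (card_union_le _ _).trans (add_le_add ?_ ?_) <;>
          exact (card_union_le _ _).trans (add_le_add (hj _) (hj _))
      · exact (card_union_le _ _).trans (add_le_add (hj _) (hj _))
  rcases Nat.eq_zero_or_pos m with h0 | h0
  · simp [h0]
  · have h5 := Nat.mul_le_mul_left m hUc
    refine Nat.le_of_mul_le_mul_left (c := m) ?_ h0
    nlinarith [hPc.trans hsum]

theorem bucket_real [Fintype V] (E : V → V → Prop) (hT : IsTournament E) (S : Finset V)
    (d : ℕ) (hS : ∀ v ∈ S, indeg E v = d) :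
    (S.card : ℝ) ≤ 9.5 * Real.sqrt ((ADT E : ℝ) + 1) + 2 := by
  have h := bucket_bound E hT S d hS
  have h' : (S.card : ℝ) ^ 2 ≤ 3 * S.card + 90 * ADT E := by exact_mod_cast h
  have hk : (0 : ℝ) ≤ ADT E := Nat.cast_nonneg _
  have hs : Real.sqrt ((ADT E : ℝ) + 1) ^ 2 = ADT E + 1 := Real.sq_sqrt (by linarith)
  have hs1 : 1 ≤ Real.sqrt ((ADT E : ℝ) + 1) := Real.one_le_sqrt.2 (by linarith)
  by_contra! hc
  nlinarith

theorem indeg_rev_other [Fintype V] (E : V → V → Prop) (u v w : V) (h1 : w ≠ u) (h2 : w ≠ v) :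
    indeg (reverseArc E u v) w = indeg E w := by
  unfold indeg
  congr 1
  ext a
  simp [reverseArc, h1, h2]

theorem indeg_rev_fst [Fintype V] (E : V → V → Prop) (hT : IsTournament E) (u v : V)
    (huv : E u v) : indeg (reverseArc E u v) u = indeg E u + 1 := by
  have hne : u ≠ v := by rintro rfl; exact hT.1 _ huv
  have hvu := (hT.2 u v hne).1 huv
  unfold indeg
  rw [← Set.ncard_insert_of_notMem (a := v) (s := {a | E a u}) (by simpa using hvu)]
  congr 1
  ext a
  by_cases h : a = v <;> simp [reverseArc, h, hne, huv]

theorem indeg_rev_snd [Fintype V] (E : V → V → Prop) (hT : IsTournament E) (u v : V)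
    (huv : E u v) : indeg (reverseArc E u v) v + 1 = indeg E v := by
  have hne : u ≠ v := by rintro rfl; exact hT.1 _ huv
  have hvu := (hT.2 u v hne).1 huv
  unfold indeg
  rw [← Set.ncard_insert_of_notMem (a := u) (s := {a | reverseArc E u v a v})
    (by simp [reverseArc, hvu, hne])]
  congr 1
  ext a
  by_cases h : a = u <;> simp [reverseArc, h, hne.symm, huv]

end Aux

/-- Reversing one arc changes the set of back arcs by at most 48(√(ADT(T)+1)+1). -/
theorem stmt11 [Fintype V] (E : V → V → Prop) (hT : IsTournament E) (u v : V)
    (huv : E u v) :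
    (Set.ncard (symmDiff (backArcs E) (backArcs (reverseArc E u v))) : ℝ) ≤
      48 * (Real.sqrt ((ADT E : ℝ) + 1) + 1) := by
  classical
  have hne : u ≠ v := by rintro rfl; exact hT.1 _ huv
  have hu := indeg_rev_fst E hT u v huv
  have hv := indeg_rev_snd E hT u v huv
  have ho := indeg_rev_other E u v
  let B : ℕ → Finset V := fun d => Finset.univ.filter fun w => indeg E w = d
  have hB : ∀ d, ((B d).card : ℝ) ≤ 9.5 * Real.sqrt ((ADT E : ℝ) + 1) + 2 := fun d =>
    bucket_real E hT (B d) d fun w hw => (Finset.mem_filter.1 hw).2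
  let R : Finset (V × V) :=
    (((B (indeg E u + 1)).image (fun w => (u, w)) ∪ (B (indeg E u)).image (fun w => (w, u))) ∪
    ((B (indeg E v)).image (fun w => (v, w)) ∪ (B (indeg E v - 1)).image (fun w => (w, v)))) ∪
    {(u, v), (v, u)}
  have hsub : symmDiff (backArcs E) (backArcs (reverseArc E u v)) ⊆ (R : Set (V × V)) := by
    rintro ⟨a, b⟩ h
    by_cases hx : (a, b) = (u, v) ∨ (a, b) = (v, u)
    · simp only [R, Finset.coe_union, Set.mem_union]
      right
      simpa using hx
    have hr : reverseArc E u v a b ↔ E a b := by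
      simp only [reverseArc]
      tauto
    rw [Set.mem_symmDiff] at h
    simp only [backArcs, Set.mem_setOf_eq, hr] at h
    have hab : E a b := by tauto
    have hnab : a ≠ b := by rintro rfl; exact hT.1 _ hab
    simp only [hab, true_and] at h
    simp only [Prod.mk.injEq] at hx
    have goal' : (a = u ∧ indeg E b = indeg E u + 1) ∨ (b = u ∧ indeg E a = indeg E u) ∨
        (a = v ∧ indeg E b = indeg E v) ∨ (b = v ∧ indeg E a = indeg E v - 1) := by
      by_cases a1 : a = u
      · subst a1
        have b1 : b ≠ v := fun h => hx (Or.inl ⟨rfl, h⟩)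
        rw [hu, ho b hnab.symm b1] at h
        left
        exact ⟨rfl, by omega⟩
      by_cases a2 : a = v
      · subst a2
        have b1 : b ≠ u := fun h => hx (Or.inr ⟨rfl, h⟩)
        rw [ho b b1 hnab.symm] at h
        right; right; left
        exact ⟨rfl, by omega⟩
      rw [ho a a1 a2] at h
      by_cases b1 : b = u
      · subst b1
        rw [hu] at h
        right; left
        exact ⟨rfl, by omega⟩
      by_cases b2 : b = v
      · subst b2
        right; right; right
        exact ⟨rfl, by omega⟩
      rw [ho b b1 b2] at h
      omega
    simp only [R, B, Finset.mem_coe, Finset.mem_union, Finset.mem_image, Finset.mem_filter,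
      Finset.mem_univ, true_and, Prod.mk.injEq]
    left
    rcases goal' with ⟨rfl, k⟩ | ⟨rfl, k⟩ | ⟨rfl, k⟩ | ⟨rfl, k⟩
    · exact Or.inl (Or.inl ⟨b, k, rfl, rfl⟩)
    · exact Or.inl (Or.inr ⟨a, k, rfl, rfl⟩)
    · exact Or.inr (Or.inl ⟨b, k, rfl, rfl⟩)
    · exact Or.inr (Or.inr ⟨a, k, rfl, rfl⟩)
  have h1 : Set.ncard (symmDiff (backArcs E) (backArcs (reverseArc E u v))) ≤ R.card := by
    rw [← Set.ncard_coe_finset]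
    exact Set.ncard_le_ncard hsub (Finset.finite_toSet _)
  have h2 : R.card ≤ (((B (indeg E u + 1)).card + (B (indeg E u)).card) +
      ((B (indeg E v)).card + (B (indeg E v - 1)).card)) + 2 := by
    refine (Finset.card_union_le _ _).trans (add_le_add ?_ Finset.card_le_two)
    refine (Finset.card_union_le _ _).trans (add_le_add ?_ ?_) <;>
      exact (Finset.card_union_le _ _).trans
        (add_le_add Finset.card_image_le Finset.card_image_le)
  have h3 : (Set.ncard (symmDiff (backArcs E) (backArcs (reverseArc E u v))) : ℝ) ≤
      (((B (indeg E u + 1)).card + (B (indeg E u)).card) +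
      ((B (indeg E v)).card + (B (indeg E v - 1)).card)) + 2 := by
    exact_mod_cast h1.trans h2
  have hs := Real.sqrt_nonneg ((ADT E : ℝ) + 1)
  linarith [hB (indeg E u + 1), hB (indeg E u), hB (indeg E v), hB (indeg E v - 1)]
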